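/- arXiv:1801.02050 — 4 statements merged into one kernel-verified Lean document; each statement's English description precedes it below -/
import Mathlib

section
/- Let f be a probability density on ℝ^d. If Q_f(ε₁, R₁) < ∞ for some ε₁ > 0 and R₁ > 0, then Q_f(ε, R) < ∞ for every ε ∈ (0, ε₁] and every R > 0. -/
open MeasureTheory ENNReal Set Filter ProbabilityTheory Matrix

noncomputable section

/-- `ℝ^d` with the Euclidean distance. -/
abbrev Euc (d : ℕ) := EuclideanSpace ℝ (Fin d)

/-- The volume `V_d = π^(d/2) / Γ(d/2 + 1)` of the unit ball in `ℝ^d`. -/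
def Vd (d : ℕ) : ℝ := Real.pi ^ ((d : ℝ) / 2) / Real.Gamma ((d : ℝ) / 2 + 1)

/-- `f` is a probability density on `ℝ^d` (w.r.t. Lebesgue measure). -/
def IsProbDensity {d : ℕ} (f : Euc d → ℝ) : Prop :=
  Measurable f ∧ (∀ x, 0 ≤ f x) ∧ ∫ x, f x = 1

/-- `G(t) = 0` for `t < 1` and `G(t) = t log t` for `t ≥ 1`. -/
def Gfun (t : ℝ) : ℝ := if t < 1 then 0 else t * Real.log t

/-- `I_f(x,r) = (∫_{B(x,r)} f) / (r^d V_d)`. -/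
def If {d : ℕ} (f : Euc d → ℝ) (x : Euc d) (r : ℝ) : ℝ :=
  (∫ y in Metric.closedBall x r, f y) / (r ^ d * Vd d)

/-- `M_f(x,R) = sup_{r ∈ (0,R]} I_f(x,r)` (with values in `[0,∞]`). -/
def Mf {d : ℕ} (f : Euc d → ℝ) (x : Euc d) (R : ℝ) : ℝ≥0∞ :=
  ⨆ r ∈ Ioc (0 : ℝ) R, ENNReal.ofReal (If f x r)

/-- `m_f(x,R) = inf_{r ∈ (0,R]} I_f(x,r)`. -/
def mf {d : ℕ} (f : Euc d → ℝ) (x : Euc d) (R : ℝ) : ℝ≥0∞ :=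
  ⨅ r ∈ Ioc (0 : ℝ) R, ENNReal.ofReal (If f x r)

/-- `K_f(ε) = ∫ (∫ G(|log ρ(x,y)|) f(y) dy)^{1+ε} f(x) dx`, with values in `[0,∞]`. -/
def Kf {d : ℕ} (f : Euc d → ℝ) (ε : ℝ) : ℝ≥0∞ :=
  ∫⁻ x, (∫⁻ y, ENNReal.ofReal (Gfun |Real.log (dist x y)|) * ENNReal.ofReal (f y)) ^ (1 + ε)
      * ENNReal.ofReal (f x)

/-- `K_{f,2}(ε) = ∫ (∫ G(log² ρ(x,y)) f(y) dy)^{1+ε} f(x) dx`. -/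
def Kf2 {d : ℕ} (f : Euc d → ℝ) (ε : ℝ) : ℝ≥0∞ :=
  ∫⁻ x, (∫⁻ y, ENNReal.ofReal (Gfun ((Real.log (dist x y)) ^ 2)) * ENNReal.ofReal (f y)) ^ (1 + ε)
      * ENNReal.ofReal (f x)

/-- `Q_f(ε,R) = ∫ M_f(x,R)^ε f(x) dx`. -/
def Qf {d : ℕ} (f : Euc d → ℝ) (ε R : ℝ) : ℝ≥0∞ :=
  ∫⁻ x, (Mf f x R) ^ ε * ENNReal.ofReal (f x)

/-- `T_f(ε,R) = ∫ m_f(x,R)^{-ε} f(x) dx` (with `0^{-ε} = ∞`). -/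
def Tf {d : ℕ} (f : Euc d → ℝ) (ε R : ℝ) : ℝ≥0∞ :=
  ∫⁻ x, (mf f x R) ^ (-ε) * ENNReal.ofReal (f x)

/-- The differential Shannon entropy `H(f) = -∫ f log f`. -/
def entropy {d : ℕ} (f : Euc d → ℝ) : ℝ := -∫ x, f x * Real.log (f x)

/-- The Euler–Mascheroni constant `γ = -∫_0^∞ e^{-t} log t dt`. -/
def eulerGamma : ℝ := -∫ t in Ioi (0 : ℝ), Real.exp (-t) * Real.log t

/-- `ρ_i`: the nearest-neighbour distance of `X i` within the sample `X 0, …, X (N-1)`. -/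
def nnDist {d : ℕ} {Ω : Type*} (X : ℕ → Ω → Euc d) (N i : ℕ) (ω : Ω) : ℝ :=
  sInf {r : ℝ | ∃ j, j < N ∧ j ≠ i ∧ r = dist (X i ω) (X j ω)}

/-- The Kozachenko–Leonenko estimate
`H_N = (d/N) Σ_{i<N} log ρ_i + log V_d + γ + log (N-1)`. -/
def KLest {d : ℕ} {Ω : Type*} (X : ℕ → Ω → Euc d) (N : ℕ) (ω : Ω) : ℝ :=
  ((d : ℝ) / N) * ∑ i ∈ Finset.range N, Real.log (nnDist X N i ω)
    + Real.log (Vd d) + eulerGamma + Real.log ((N : ℝ) - 1)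

/-- The density of a nondegenerate Gaussian vector with mean `ν` and covariance `S`. -/
def gaussDensity {d : ℕ} (ν : Euc d) (S : Matrix (Fin d) (Fin d) ℝ) (x : Euc d) : ℝ :=
  (2 * Real.pi) ^ (-(d : ℝ) / 2) * S.det ^ (-(1 : ℝ) / 2) *
    Real.exp (-(1 / 2) * (S⁻¹.mulVec (fun i => x i - ν i) ⬝ᵥ fun i => x i - ν i))

end

/-- Lemma 2, part 2: if `Q_f(ε₁,R₁) < ∞` for some `ε₁ > 0`, `R₁ > 0` then `Q_f(ε,R) < ∞`
for every `ε ∈ (0, ε₁]` and every `R > 0`. -/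
theorem Qf_lt_top_mono {d : ℕ} (f : Euc d → ℝ) (hf : IsProbDensity f)
    {ε₁ R₁ : ℝ} (hε₁ : 0 < ε₁) (hR₁ : 0 < R₁) (hQ : Qf f ε₁ R₁ < ⊤) :
    ∀ ε ∈ Ioc (0 : ℝ) ε₁, ∀ R > (0 : ℝ), Qf f ε R < ⊤ := by
  intro ε hε R hR
  obtain ⟨hm, h0, h1⟩ := hf
  have hint : Integrable f := by
    by_contra h
    rw [integral_undef h] at h1
    exact zero_ne_one h1
  have hV : 0 < Vd d := by
    unfold Vd
    have : 0 < Real.Gamma ((d : ℝ) / 2 + 1) := Real.Gamma_pos_of_pos (by positivity)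
    have := Real.pi_pos
    positivity
  set C : ℝ≥0∞ := ENNReal.ofReal (1 / (R₁ ^ d * Vd d)) with hC
  have hM : ∀ x, Mf f x R ≤ max (Mf f x R₁) C := by
    intro x
    refine iSup₂_le fun r hr => ?_
    by_cases hrR : r ≤ R₁
    · exact le_max_of_le_left
        (le_iSup₂ (f := fun r (_ : r ∈ Ioc (0 : ℝ) R₁) => ENNReal.ofReal (If f x r)) r ⟨hr.1, hrR⟩)
    · refine le_max_of_le_right (ENNReal.ofReal_le_ofReal ?_)
      unfold If
      have hle : ∫ y in Metric.closedBall x r, f y ≤ 1 := by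
        rw [← h1]
        exact setIntegral_le_integral hint (Eventually.of_forall h0)
      have h2 : R₁ ^ d ≤ r ^ d := pow_le_pow_left₀ hR₁.le (not_le.mp hrR).le d
      exact div_le_div₀ zero_le_one hle (by positivity) (mul_le_mul_of_nonneg_right h2 hV.le)
  have hpow : ∀ x, (Mf f x R) ^ ε ≤ (Mf f x R₁) ^ ε₁ + (1 + C ^ ε) := by
    intro x
    refine (ENNReal.rpow_le_rpow (hM x) hε.1.le).trans ?_
    rcases le_total (Mf f x R₁) C with h | h
    · rw [max_eq_right h]
      exact le_add_left (le_add_left le_rfl)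
    · rw [max_eq_left h]
      rcases le_total (Mf f x R₁) 1 with h' | h'
      · exact le_add_left (le_add_right (ENNReal.rpow_le_one h' hε.1.le))
      · exact le_add_right (ENNReal.rpow_le_rpow_of_exponent_le h' hε.2)
  have hfl : ∫⁻ x, ENNReal.ofReal (f x) < ⊤ := by
    rw [← ofReal_integral_eq_lintegral_ofReal hint (Eventually.of_forall h0)]
    exact ENNReal.ofReal_lt_top
  have hCt : 1 + C ^ ε < ⊤ :=
    ENNReal.add_lt_top.2 ⟨ENNReal.one_lt_top,
      ENNReal.rpow_lt_top_of_nonneg hε.1.le ENNReal.ofReal_ne_top⟩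
  calc Qf f ε R
      ≤ ∫⁻ x, ((Mf f x R₁) ^ ε₁ * ENNReal.ofReal (f x) + (1 + C ^ ε) * ENNReal.ofReal (f x)) := by
        refine lintegral_mono fun x => ?_
        rw [← add_mul]
        exact mul_le_mul_left (hpow x) _
    _ = Qf f ε₁ R₁ + (1 + C ^ ε) * ∫⁻ x, ENNReal.ofReal (f x) := by
        rw [lintegral_add_right _ (hm.ennreal_ofReal.const_mul _),
          lintegral_const_mul _ hm.ennreal_ofReal]
        rfl
    _ < ⊤ := ENNReal.add_lt_top.2 ⟨hQ, ENNReal.mul_lt_top hCt hfl⟩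
end

section
/- Let f be a probability density on ℝ^d. If T_f(ε₂, R₂) < ∞ for some ε₂ > 0 and R₂ > 0, then T_f(ε, R) < ∞ for every ε ∈ (0, ε₂] and every R > 0. -/
open MeasureTheory ENNReal Set Filter ProbabilityTheory Matrix

theorem mf_compare {d : ℕ} (f : Euc d → ℝ) (hf : IsProbDensity f)
    {R₂ R : ℝ} (hR₂ : 0 < R₂) (hR : 0 < R) (x : Euc d) :
    ENNReal.ofReal ((R₂ / (R₂ + R)) ^ d) * mf f x R₂ ≤ mf f x R := by
  obtain ⟨_, h0, h1⟩ := hf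
  have hint : Integrable f := by
    by_contra h
    rw [integral_undef h] at h1
    exact zero_ne_one h1
  have hV : 0 < Vd d := by
    unfold Vd
    have : 0 < Real.Gamma ((d : ℝ) / 2 + 1) := Real.Gamma_pos_of_pos (by positivity)
    positivity
  unfold mf
  refine le_iInf₂ fun r hr => ?_
  by_cases hle : r ≤ R₂
  · have hc : ENNReal.ofReal ((R₂ / (R₂ + R)) ^ d) ≤ 1 := by
      rw [ENNReal.ofReal_le_one]
      apply pow_le_one₀ (by positivity)
      rw [div_le_one (by positivity)]
      linarith
    calc _ ≤ 1 * _ := mul_le_mul_left hc _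
      _ ≤ _ := by
        rw [one_mul]
        exact iInf₂_le r ⟨hr.1, hle⟩
  · push Not at hle
    have hr0 := hr.1
    have hr1 := hr.2
    calc _ ≤ ENNReal.ofReal ((R₂ / (R₂ + R)) ^ d) * ENNReal.ofReal (If f x R₂) :=
          mul_le_mul_right (iInf₂_le R₂ ⟨hR₂, le_rfl⟩) _
      _ = ENNReal.ofReal ((R₂ / (R₂ + R)) ^ d * If f x R₂) := by
          rw [ENNReal.ofReal_mul (by positivity)]
      _ ≤ _ := by
          apply ENNReal.ofReal_le_ofReal
          unfold If
          have e : (R₂ / (R₂ + R)) ^ d *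
              ((∫ y in Metric.closedBall x R₂, f y) / (R₂ ^ d * Vd d)) =
              (∫ y in Metric.closedBall x R₂, f y) / ((R₂ + R) ^ d * Vd d) := by
            rw [div_pow]
            field_simp
          rw [e]
          have hm : (∫ y in Metric.closedBall x R₂, f y) ≤ ∫ y in Metric.closedBall x r, f y :=
            setIntegral_mono_set hint.integrableOn (Eventually.of_forall h0)
              (Metric.closedBall_subset_closedBall hle.le).eventuallyLE
          have hn : 0 ≤ ∫ y in Metric.closedBall x r, f y := integral_nonneg h0
          have : r ≤ R₂ + R := by linarith
          gcongr

/-- Lemma 2, part 3: if `T_f(ε₂,R₂) < ∞` for some `ε₂ > 0`, `R₂ > 0` then `T_f(ε,R) < ∞`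
for every `ε ∈ (0, ε₂]` and every `R > 0`. -/
theorem Tf_lt_top_mono {d : ℕ} (f : Euc d → ℝ) (hf : IsProbDensity f)
    {ε₂ R₂ : ℝ} (hε₂ : 0 < ε₂) (hR₂ : 0 < R₂) (hT : Tf f ε₂ R₂ < ⊤) :
    ∀ ε ∈ Ioc (0 : ℝ) ε₂, ∀ R > (0 : ℝ), Tf f ε R < ⊤ := by
  intro ε hε R hR
  have hint : Integrable f := by
    by_contra h
    have h1 := hf.2.2
    rw [integral_undef h] at h1
    exact zero_ne_one h1
  set c := ENNReal.ofReal ((R₂ / (R₂ + R)) ^ d) with hc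
  have hc0 : c ≠ 0 := by
    rw [hc, Ne, ENNReal.ofReal_eq_zero, not_le]
    positivity
  have hct : c ≠ ⊤ := ENNReal.ofReal_ne_top
  have hce : c ^ (-ε) ≠ ⊤ := ENNReal.rpow_ne_top_of_ne_zero hc0 hct
  have key : ∀ x, (mf f x R) ^ (-ε) ≤ c ^ (-ε) * (1 + (mf f x R₂) ^ (-ε₂)) := by
    intro x
    have h1 : (mf f x R) ^ (-ε) ≤ (c * mf f x R₂) ^ (-ε) := by
      rw [ENNReal.rpow_neg, ENNReal.rpow_neg]
      exact ENNReal.inv_le_inv.2 (ENNReal.rpow_le_rpow (mf_compare f hf hR₂ hR x) hε.1.le)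
    have h2 : (c * mf f x R₂) ^ (-ε) = c ^ (-ε) * (mf f x R₂) ^ (-ε) := by
      have hp : c ^ ε ≠ 0 := by simp [ENNReal.rpow_eq_zero_iff, hc0, hct]
      have hq : c ^ ε ≠ ⊤ := ENNReal.rpow_ne_top_of_nonneg hε.1.le hct
      rw [ENNReal.rpow_neg, ENNReal.rpow_neg, ENNReal.rpow_neg,
        ENNReal.mul_rpow_of_nonneg _ _ hε.1.le, ENNReal.mul_inv (Or.inl hp) (Or.inl hq)]
    rw [h2] at h1
    refine h1.trans (mul_le_mul_right ?_ _)
    rcases le_total 1 (mf f x R₂) with h | h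
    · refine le_trans ?_ le_self_add
      rw [ENNReal.rpow_neg, ENNReal.inv_le_one]
      exact ENNReal.one_le_rpow h hε.1
    · refine le_trans ?_ le_add_self
      exact ENNReal.rpow_le_rpow_of_exponent_ge h (by linarith [hε.2])
  have hfl : ∫⁻ x, ENNReal.ofReal (f x) < ⊤ := by
    have := hint.lintegral_lt_top
    exact this
  unfold Tf at hT ⊢
  calc _ ≤ ∫⁻ x, c ^ (-ε) * (ENNReal.ofReal (f x) + (mf f x R₂) ^ (-ε₂) * ENNReal.ofReal (f x)) := by
        refine lintegral_mono fun x => ?_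
        calc _ ≤ c ^ (-ε) * (1 + (mf f x R₂) ^ (-ε₂)) * ENNReal.ofReal (f x) :=
              mul_le_mul_left (key x) _
          _ = _ := by ring
    _ = c ^ (-ε) * ((∫⁻ x, ENNReal.ofReal (f x))
          + ∫⁻ x, (mf f x R₂) ^ (-ε₂) * ENNReal.ofReal (f x)) := by
        rw [lintegral_const_mul' _ _ hce, lintegral_add_left hf.1.ennreal_ofReal]
    _ < ⊤ := ENNReal.mul_lt_top hce.lt_top (ENNReal.add_lt_top.2 ⟨hfl, hT⟩)
end

section
/- Let f be a probability density on ℝ^d. If Q_f(ε₁, R₁) < ∞ and T_f(ε₂, R₂) < ∞ for some positive ε₁, ε₂, R₁, R₂, then ∫_{ℝ^d} |log f(x)| f(x) dx ≤ (1/ε₁) Q_f(ε₁,R₁) + (1/ε₂) T_f(ε₂,R₂) < ∞; in particular the differential entropy H(f) = −∫ f log f is finite. -/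
open MeasureTheory ENNReal Set Filter ProbabilityTheory Matrix

theorem vol_real_closedBall_aux {d : ℕ} (x : Euc d) {r : ℝ} (hr : 0 < r) :
    volume.real (Metric.closedBall x r) = r ^ d * Vd d := by
  rcases Nat.eq_zero_or_pos d with rfl | hd
  · have h1 : Metric.closedBall x r = univ := by
      ext y
      simp [Subsingleton.elim y x, hr.le]
    rw [h1, measureReal_def, ← (EuclideanSpace.volume_preserving_symm_measurableEquiv_toLp
      (Fin 0)).symm.measure_preimage_equiv]
    simp [Vd, Measure.volume_pi_eq_dirac (0 : Fin 0 → ℝ)]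
  · have : Nonempty (Fin d) := ⟨⟨0, hd⟩⟩
    have hG : 0 < Real.Gamma ((d : ℝ) / 2 + 1) := Real.Gamma_pos_of_pos (by positivity)
    rw [measureReal_def, EuclideanSpace.volume_closedBall, Fintype.card_fin, ENNReal.toReal_mul,
      ENNReal.toReal_pow, ENNReal.toReal_ofReal hr.le, ENNReal.toReal_ofReal (by positivity), Vd,
      Real.sqrt_eq_rpow, ← Real.rpow_natCast (Real.pi ^ (1 / 2 : ℝ)), ← Real.rpow_mul Real.pi_pos.le]
    rw [show (1 / 2 : ℝ) * (d : ℝ) = (d : ℝ) / 2 by ring]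

theorem ae_tendsto_If_aux {d : ℕ} (f : Euc d → ℝ) (hi : Integrable f) :
    ∀ᵐ x, Tendsto (fun r => ENNReal.ofReal (If f x r)) (nhdsWithin 0 (Ioi 0))
      (nhds (ENNReal.ofReal (f x))) := by
  filter_upwards [(Besicovitch.vitaliFamily (volume : Measure (Euc d))).ae_tendsto_average
    hi.locallyIntegrable] with x hx
  refine ENNReal.tendsto_ofReal (((hx.comp (Besicovitch.tendsto_filterAt volume x))).congr' ?_)
  filter_upwards [self_mem_nhdsWithin] with r hr
  simp only [Function.comp, If]
  rw [setAverage_eq, vol_real_closedBall_aux x hr, smul_eq_mul, inv_mul_eq_div]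

theorem ae_le_Mf_aux {d : ℕ} (f : Euc d → ℝ) (hi : Integrable f) {R : ℝ} (hR : 0 < R) :
    ∀ᵐ x, ENNReal.ofReal (f x) ≤ Mf f x R := by
  filter_upwards [ae_tendsto_If_aux f hi] with x hx
  refine le_of_tendsto hx ?_
  filter_upwards [Ioc_mem_nhdsGT hR] with r hr
  exact le_iSup₂ (f := fun r (_ : r ∈ Ioc (0 : ℝ) R) => ENNReal.ofReal (If f x r)) r hr

theorem ae_mf_le_aux {d : ℕ} (f : Euc d → ℝ) (hi : Integrable f) {R : ℝ} (hR : 0 < R) :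
    ∀ᵐ x, mf f x R ≤ ENNReal.ofReal (f x) := by
  filter_upwards [ae_tendsto_If_aux f hi] with x hx
  refine ge_of_tendsto hx ?_
  filter_upwards [Ioc_mem_nhdsGT hR] with r hr
  exact iInf₂_le (f := fun r (_ : r ∈ Ioc (0 : ℝ) R) => ENNReal.ofReal (If f x r)) r hr

/-- Remark 2: if `Q_f(ε₁,R₁) < ∞` and `T_f(ε₂,R₂) < ∞`, then
`∫ |log f| f ≤ (1/ε₁) Q_f(ε₁,R₁) + (1/ε₂) T_f(ε₂,R₂) < ∞`; in particular the
differential entropy of `f` is finite. -/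
theorem abs_log_density_integrable {d : ℕ} (f : Euc d → ℝ) (hf : IsProbDensity f)
    {ε₁ ε₂ R₁ R₂ : ℝ} (hε₁ : 0 < ε₁) (hε₂ : 0 < ε₂) (hR₁ : 0 < R₁) (hR₂ : 0 < R₂)
    (hQ : Qf f ε₁ R₁ < ⊤) (hT : Tf f ε₂ R₂ < ⊤) :
    (∫⁻ x, ENNReal.ofReal (|Real.log (f x)| * f x)
        ≤ ENNReal.ofReal (1 / ε₁) * Qf f ε₁ R₁ + ENNReal.ofReal (1 / ε₂) * Tf f ε₂ R₂)
      ∧ ∫⁻ x, ENNReal.ofReal (|Real.log (f x)| * f x) < ⊤ := by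
  obtain ⟨hm, h0, h1⟩ := hf
  have hi : Integrable f := by
    by_contra h
    rw [integral_undef h] at h1
    exact zero_ne_one h1
  have hA : ∫⁻ x, ENNReal.ofReal (Real.log (f x)) * ENNReal.ofReal (f x)
      ≤ ENNReal.ofReal (1 / ε₁) * Qf f ε₁ R₁ := by
    rw [Qf, ← lintegral_const_mul' _ _ ENNReal.ofReal_ne_top]
    refine lintegral_mono_ae ?_
    filter_upwards [ae_le_Mf_aux f hi hR₁] with x hx
    rw [← mul_assoc]
    gcongr
    calc ENNReal.ofReal (Real.log (f x)) ≤ ENNReal.ofReal (1 / ε₁ * (f x) ^ ε₁) := by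
          apply ENNReal.ofReal_le_ofReal
          have := Real.log_le_rpow_div (h0 x) hε₁
          rwa [one_div, inv_mul_eq_div]
      _ = ENNReal.ofReal (1 / ε₁) * (ENNReal.ofReal (f x)) ^ ε₁ := by
          rw [ENNReal.ofReal_mul (by positivity), ENNReal.ofReal_rpow_of_nonneg (h0 x) hε₁.le]
      _ ≤ _ := by gcongr
  have hB : ∫⁻ x, ENNReal.ofReal (-Real.log (f x)) * ENNReal.ofReal (f x)
      ≤ ENNReal.ofReal (1 / ε₂) * Tf f ε₂ R₂ := by
    rw [Tf, ← lintegral_const_mul' _ _ ENNReal.ofReal_ne_top]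
    refine lintegral_mono_ae ?_
    filter_upwards [ae_mf_le_aux f hi hR₂] with x hx
    rw [← mul_assoc]
    rcases (h0 x).eq_or_lt with hz | hpos
    · simp [← hz]
    gcongr
    calc ENNReal.ofReal (-Real.log (f x)) ≤ ENNReal.ofReal (1 / ε₂ * (f x) ^ (-ε₂)) := by
          apply ENNReal.ofReal_le_ofReal
          have := Real.log_le_rpow_div (inv_nonneg.2 (h0 x)) hε₂
          rw [Real.log_inv, Real.inv_rpow (h0 x), ← Real.rpow_neg (h0 x)] at this
          rwa [one_div, inv_mul_eq_div]
      _ = ENNReal.ofReal (1 / ε₂) * (ENNReal.ofReal (f x)) ^ (-ε₂) := by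
          rw [ENNReal.ofReal_mul (by positivity), ENNReal.ofReal_rpow_of_pos hpos]
      _ ≤ _ := by
          rw [ENNReal.rpow_neg, ENNReal.rpow_neg]
          gcongr
  have hle : ∫⁻ x, ENNReal.ofReal (|Real.log (f x)| * f x)
        ≤ ENNReal.ofReal (1 / ε₁) * Qf f ε₁ R₁ + ENNReal.ofReal (1 / ε₂) * Tf f ε₂ R₂ := by
    refine le_trans ?_ (add_le_add hA hB)
    rw [← lintegral_add_left (by fun_prop)]
    refine lintegral_mono fun x => ?_
    rw [← add_mul, ENNReal.ofReal_mul (abs_nonneg _)]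
    gcongr
    rcases abs_cases (Real.log (f x)) with h | h <;> rw [h.1]
    · exact le_self_add
    · exact le_add_self
  exact ⟨hle, hle.trans_lt (ENNReal.add_lt_top.2 ⟨ENNReal.mul_lt_top ENNReal.ofReal_lt_top hQ,
    ENNReal.mul_lt_top ENNReal.ofReal_lt_top hT⟩)⟩
end

section
/- Let f be the density of a nondegenerate Gaussian distribution on ℝ^d with mean ν and positive-definite covariance matrix Σ, and let λ_min be the smallest eigenvalue of Σ. Then for every R > 0, every r ∈ (0,R] and every x ∈ ℝ^d, ∫_{B(x,r)} f(z) dz ≥ f(x) e^{−R²/(2λ_min)} r^d V_d; equivalently, m_f(x,R) ≥ e^{−R²/(2λ_min)} f(x) for all x ∈ ℝ^d. -/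
open MeasureTheory ENNReal Set Filter ProbabilityTheory Matrix

lemma rayleigh_aux {d : ℕ} {S : Matrix (Fin d) (Fin d) ℝ} (hS : S.PosDef) (w : Fin d → ℝ) :
    (⨅ i, hS.1.eigenvalues i) * (w ⬝ᵥ w) ≤ w ⬝ᵥ S.mulVec w := by
  set l := ⨅ i, hS.1.eigenvalues i with hl
  have hH : (S - algebraMap ℝ (Matrix (Fin d) (Fin d) ℝ) l).IsHermitian := by
    refine hS.1.sub ?_
    rw [Algebra.algebraMap_eq_smul_one, IsHermitian]
    simp
  have hP : (S - algebraMap ℝ (Matrix (Fin d) (Fin d) ℝ) l).PosSemidef := by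
    rw [hH.posSemidef_iff_eigenvalues_nonneg]
    intro i
    have h1 := hH.eigenvalues_mem_spectrum_real i
    set m := hH.eigenvalues i
    have h2 : m + l ∈ spectrum ℝ S := by
      have := (spectrum.add_mem_add_iff (r := m) (s := l)
        (a := S - algebraMap ℝ (Matrix (Fin d) (Fin d) ℝ) l)).2 h1
      simpa using this
    rw [hS.1.spectrum_real_eq_range_eigenvalues] at h2
    obtain ⟨j, hj⟩ := h2
    have h3 : l ≤ hS.1.eigenvalues j := ciInf_le (Set.finite_range _).bddBelow j
    show (0:ℝ) ≤ m
    linarith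
  have := hP.dotProduct_mulVec_nonneg w
  rw [Algebra.algebraMap_eq_smul_one, sub_mulVec, smul_mulVec, one_mulVec, dotProduct_sub,
    dotProduct_smul] at this
  simpa using this

lemma quad_aux {d : ℕ} (hd : 0 < d) {S : Matrix (Fin d) (Fin d) ℝ} (hS : S.PosDef)
    (y : Fin d → ℝ) :
    0 < (⨅ i, hS.1.eigenvalues i) ∧
    S⁻¹.mulVec y ⬝ᵥ y ≤ (y ⬝ᵥ y) / (⨅ i, hS.1.eigenvalues i) := by
  haveI : Nonempty (Fin d) := ⟨⟨0, hd⟩⟩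
  have hR := rayleigh_aux hS (S⁻¹.mulVec y)
  have hpos : 0 < (⨅ i, hS.1.eigenvalues i) := by
    obtain ⟨i, hi⟩ := exists_eq_ciInf_of_finite (f := hS.1.eigenvalues)
    rw [← hi]
    exact hS.eigenvalues_pos i
  set l := ⨅ i, hS.1.eigenvalues i with hl
  refine ⟨hpos, ?_⟩
  rw [mulVec_mulVec, mul_nonsing_inv S (hS.isUnit.map detMonoidHom), one_mulVec] at hR
  set w := S⁻¹.mulVec y
  have h0 : 0 ≤ (y - l • w) ⬝ᵥ (y - l • w) := by
    rw [dotProduct]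
    exact Finset.sum_nonneg fun i _ => mul_self_nonneg _
  simp only [sub_dotProduct, dotProduct_sub, smul_dotProduct, dotProduct_smul, smul_eq_mul,
    dotProduct_comm y w] at h0
  rw [le_div_iff₀ hpos]
  nlinarith

lemma gauss_cont {d : ℕ} (ν : Euc d) (S : Matrix (Fin d) (Fin d) ℝ) :
    Continuous (gaussDensity ν S) := by
  unfold gaussDensity
  simp only [mulVec, dotProduct]
  fun_prop

lemma vol_aux {d : ℕ} (hd : 0 < d) (x : Euc d) {r : ℝ} (hr : 0 < r) :
    volume.real (Metric.closedBall x r) = r ^ d * Vd d ∧ 0 < r ^ d * Vd d := by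
  haveI : Nonempty (Fin d) := ⟨⟨0, hd⟩⟩
  have hV : 0 < Vd d := by
    unfold Vd
    have := Real.Gamma_pos_of_pos (s := (d : ℝ) / 2 + 1) (by positivity)
    positivity
  refine ⟨?_, by positivity⟩
  have hV' : √Real.pi ^ d / Real.Gamma ((d : ℝ) / 2 + 1) = Vd d := by
    unfold Vd
    rw [Real.sqrt_eq_rpow, ← Real.rpow_natCast, ← Real.rpow_mul Real.pi_pos.le]
    congr 2
    ring
  rw [measureReal_def, EuclideanSpace.volume_closedBall, Fintype.card_fin, hV',
    ENNReal.toReal_mul, ENNReal.toReal_pow, ENNReal.toReal_ofReal hr.le,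
    ENNReal.toReal_ofReal hV.le]

lemma pair_aux {d : ℕ} (hd : 0 < d) (ν : Euc d)
    (S : Matrix (Fin d) (Fin d) ℝ) (hS : S.PosDef) {R : ℝ} (x y : Euc d)
    (hy : ‖y‖ ≤ R) :
    2 * (gaussDensity ν S x * Real.exp (-(R ^ 2) / (2 * ⨅ i, hS.1.eigenvalues i)))
      ≤ gaussDensity ν S (x + y) + gaussDensity ν S (x - y) := by
  obtain ⟨hl, hq⟩ := quad_aux hd hS y
  have hC : 0 ≤ (2 * Real.pi) ^ (-(d : ℝ) / 2) * S.det ^ (-(1 : ℝ) / 2) :=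
    mul_nonneg (by positivity) (Real.rpow_nonneg hS.det_pos.le _)
  unfold gaussDensity
  set l := ⨅ i, hS.1.eigenvalues i
  set C := (2 * Real.pi) ^ (-(d : ℝ) / 2) * S.det ^ (-(1 : ℝ) / 2)
  have e1 : (fun i => (x + y) i - ν i) = (fun i => x i - ν i) + (y : Fin d → ℝ) := by
    ext i; simp; ring
  have e2 : (fun i => (x - y) i - ν i) = (fun i => x i - ν i) - (y : Fin d → ℝ) := by
    ext i; simp; ring
  rw [e1, e2]
  set u : Fin d → ℝ := fun i => x i - ν i
  have hyy : (y : Fin d → ℝ) ⬝ᵥ y ≤ R ^ 2 := by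
    have : (y : Fin d → ℝ) ⬝ᵥ y = ‖y‖ ^ 2 := by
      rw [EuclideanSpace.real_norm_sq_eq, dotProduct]
      simp [sq]
    rw [this]
    gcongr
  have hq2 : S⁻¹.mulVec y ⬝ᵥ y ≤ R ^ 2 / l := hq.trans (by gcongr)
  simp only [mulVec_add, mulVec_sub, add_dotProduct, sub_dotProduct, dotProduct_add,
    dotProduct_sub]
  set q := S⁻¹.mulVec y ⬝ᵥ (y : Fin d → ℝ)
  set a := S⁻¹.mulVec u ⬝ᵥ u
  set b := S⁻¹.mulVec u ⬝ᵥ (y : Fin d → ℝ)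
  set c := S⁻¹.mulVec y ⬝ᵥ u
  have e3 : -(R ^ 2) / (2 * l) = -(1 / 2) * (R ^ 2 / l) := by field_simp
  have key : 2 * (Real.exp (-(1 / 2) * a) * Real.exp (-(R ^ 2) / (2 * l))) ≤
      Real.exp (-(1 / 2) * (a + c + (b + q))) + Real.exp (-(1 / 2) * (a - c - (b - q))) := by
    have h1 : Real.exp (-(1 / 2) * a) * Real.exp (-(R ^ 2) / (2 * l)) ≤
        Real.exp (-(1 / 2) * (a + q)) := by
      rw [← Real.exp_add, e3]
      apply Real.exp_le_exp.2
      linarith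
    have h2 : Real.exp (-(1 / 2) * (a + c + (b + q))) =
        Real.exp (-(1 / 2) * (a + q)) * Real.exp (-(1 / 2) * (b + c)) := by
      rw [← Real.exp_add]; ring_nf
    have h3 : Real.exp (-(1 / 2) * (a - c - (b - q))) =
        Real.exp (-(1 / 2) * (a + q)) * Real.exp (-(-(1 / 2) * (b + c))) := by
      rw [← Real.exp_add]; ring_nf
    have h4 : 2 ≤ Real.exp (-(1 / 2) * (b + c)) + Real.exp (-(-(1 / 2) * (b + c))) := by
      have := Real.one_le_cosh (-(1 / 2) * (b + c))
      rw [Real.cosh_eq] at this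
      linarith
    rw [h2, h3, ← mul_add]
    nlinarith [Real.exp_pos (-(1 / 2) * (a + q))]
  nlinarith [mul_le_mul_of_nonneg_left key hC]

lemma main_aux {d : ℕ} (hd : 0 < d) (ν : Euc d)
    (S : Matrix (Fin d) (Fin d) ℝ) (hS : S.PosDef) {R : ℝ} 
    (r : ℝ) (hr : r ∈ Ioc (0 : ℝ) R) (x : Euc d) :
        gaussDensity ν S x * Real.exp (-(R ^ 2) / (2 * ⨅ i, hS.1.eigenvalues i))
            * (r ^ d * Vd d)
          ≤ ∫ z in Metric.closedBall x r, gaussDensity ν S z := by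
  have hc := gauss_cont ν S
  have hplus : ∫ z in Metric.closedBall x r, gaussDensity ν S z =
      ∫ y in Metric.closedBall (0 : Euc d) r, gaussDensity ν S (x + y) := by
    have := (measurePreserving_add_left (volume : Measure (Euc d)) x).setIntegral_preimage_emb
      (measurableEmbedding_addLeft x) (gaussDensity ν S) (Metric.closedBall x r)
    rw [← this]
    congr 2
    ext y
    simp
  have hminus : ∫ z in Metric.closedBall x r, gaussDensity ν S z =
      ∫ y in Metric.closedBall (0 : Euc d) r, gaussDensity ν S (x - y) := by
    have := (Measure.measurePreserving_neg (volume : Measure (Euc d))).setIntegral_preimage_emb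
      (MeasurableEquiv.neg (Euc d)).measurableEmbedding (fun y => gaussDensity ν S (x + y))
      (Metric.closedBall 0 r)
    rw [hplus, ← this]
    simp only [← sub_eq_add_neg]
    congr 2
    ext y
    simp
  have hcb := isCompact_closedBall (0 : Euc d) r
  have i1 : IntegrableOn (fun y => gaussDensity ν S (x + y)) (Metric.closedBall (0 : Euc d) r) :=
    (hc.comp (by fun_prop)).continuousOn.integrableOn_compact hcb
  have i2 : IntegrableOn (fun y => gaussDensity ν S (x - y)) (Metric.closedBall (0 : Euc d) r) :=
    (hc.comp (by fun_prop)).continuousOn.integrableOn_compact hcb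
  have hge : ∫ y in Metric.closedBall (0 : Euc d) r,
      2 * (gaussDensity ν S x * Real.exp (-(R ^ 2) / (2 * ⨅ i, hS.1.eigenvalues i))) ≤
      ∫ y in Metric.closedBall (0 : Euc d) r,
        (gaussDensity ν S (x + y) + gaussDensity ν S (x - y)) := by
    refine setIntegral_mono_on (continuousOn_const.integrableOn_compact hcb) (i1.add i2)
      Metric.isClosed_closedBall.measurableSet fun y hy => ?_
    exact pair_aux hd ν S hS x y ((mem_closedBall_zero_iff.1 hy).trans hr.2)
  rw [integral_add i1 i2, ← hplus, ← hminus, setIntegral_const,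
    (vol_aux hd (0 : Euc d) hr.1).1, smul_eq_mul] at hge
  linarith

/-- For a nondegenerate Gaussian density `f` with covariance `S` and smallest eigenvalue
`λ_min`, one has `∫_{B(x,r)} f ≥ f(x) e^{-R²/(2λ_min)} r^d V_d` for all `0 < r ≤ R`;
equivalently `m_f(x,R) ≥ e^{-R²/(2λ_min)} f(x)` for all `x`. -/
theorem gaussian_density_condition {d : ℕ} (hd : 0 < d) (ν : Euc d)
    (S : Matrix (Fin d) (Fin d) ℝ) (hS : S.PosDef) {R : ℝ} (hR : 0 < R) :
    (∀ r ∈ Ioc (0 : ℝ) R, ∀ x : Euc d,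
        gaussDensity ν S x * Real.exp (-(R ^ 2) / (2 * ⨅ i, hS.1.eigenvalues i))
            * (r ^ d * Vd d)
          ≤ ∫ z in Metric.closedBall x r, gaussDensity ν S z)
    ∧ ∀ x : Euc d,
        ENNReal.ofReal (Real.exp (-(R ^ 2) / (2 * ⨅ i, hS.1.eigenvalues i))
            * gaussDensity ν S x)
          ≤ mf (gaussDensity ν S) x R := by
  refine ⟨main_aux hd ν S hS, fun x => ?_⟩
  refine le_iInf₂ fun r hr => ENNReal.ofReal_le_ofReal ?_
  have h := main_aux hd ν S hS r hr x
  unfold If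
  rw [le_div_iff₀ (vol_aux hd x hr.1).2]
  linarith
end
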